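/- arXiv:2007.02110 — 2 statements merged into one kernel-verified Lean document; each statement's English description precedes it below -/
import Mathlib

section
/- Let n ≥ 1, ℏ > 0, let V : ℝⁿ → ℝ be C¹, let D ⊆ ℝ × ℝⁿ be open, and let η* : D → (0,∞) be C³ (all partial derivatives up to order 3, including mixed time–space derivatives, exist and are continuous) and satisfy −ℏ ∂_t η* = −(ℏ²/2) Δ_x η* + V(x) η* on D. Define the backward drift b* := −ℏ ∇_x log η* : D → ℝⁿ. Then b* satisfies the vector equation ∂_t b* + (b* · ∇_x) b* − (ℏ/2) Δ_x b* − ∇V(x) = 0 on D, where (b* · ∇_x) b* denotes the vector field with i-th component Σ_j b*_j ∂_{x_j} b*_i. -/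
/-! With `S = log η`, the heat-type equation divided by `η` is the Hamilton–Jacobi–Bellman equation
`-ℏ ∂_t S = -(ℏ²/2) ∑ⱼ (∂ⱼ∂ⱼ S + (∂ⱼ S)²) + V` on `D` (`log_heat`). Differentiating it in `xᵢ` and
commuting the partial derivatives of the `C³` function `S` gives the `i`-th component of the drift
equation, since `bᵢ = -ℏ ∂ᵢ S`.

All partial derivatives are expressed through the directional derivative `dd` on the product
`ℝ × ℝⁿ`, which is legitimate because the functions involved are differentiable on the open
set `D`. -/

/-- Time partial derivative of `ψ : ℝ × ℝⁿ → ℝ` at `p = (t,x)`. -/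
noncomputable def pT {n : ℕ} (ψ : ℝ × EuclideanSpace ℝ (Fin n) → ℝ)
    (p : ℝ × EuclideanSpace ℝ (Fin n)) : ℝ :=
  deriv (fun s => ψ (s, p.2)) p.1

/-- Spatial gradient of `ψ : ℝ × ℝⁿ → ℝ` at `p = (t,x)`. -/
noncomputable def gX {n : ℕ} (ψ : ℝ × EuclideanSpace ℝ (Fin n) → ℝ)
    (p : ℝ × EuclideanSpace ℝ (Fin n)) : EuclideanSpace ℝ (Fin n) :=
  gradient (fun y => ψ (p.1, y)) p.2

/-- Spatial Laplacian of `ψ : ℝ × ℝⁿ → ℝ` at `p = (t,x)`. -/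
noncomputable def lapX {n : ℕ} (ψ : ℝ × EuclideanSpace ℝ (Fin n) → ℝ)
    (p : ℝ × EuclideanSpace ℝ (Fin n)) : ℝ :=
  ∑ i, fderiv ℝ (fun y => fderiv ℝ (fun y' => ψ (p.1, y')) y (EuclideanSpace.single i 1))
    p.2 (EuclideanSpace.single i 1)

/-- Time partial derivative of a vector field `b : ℝ × ℝⁿ → ℝⁿ` at `p = (t,x)`. -/
noncomputable def pTv {n : ℕ} (b : ℝ × EuclideanSpace ℝ (Fin n) → EuclideanSpace ℝ (Fin n))
    (p : ℝ × EuclideanSpace ℝ (Fin n)) : EuclideanSpace ℝ (Fin n) :=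
  deriv (fun s => b (s, p.2)) p.1

/-- Componentwise spatial Laplacian of a vector field `b : ℝ × ℝⁿ → ℝⁿ` at `p = (t,x)`. -/
noncomputable def lapXv {n : ℕ} (b : ℝ × EuclideanSpace ℝ (Fin n) → EuclideanSpace ℝ (Fin n))
    (p : ℝ × EuclideanSpace ℝ (Fin n)) : EuclideanSpace ℝ (Fin n) :=
  ∑ i, fderiv ℝ (fun y => fderiv ℝ (fun y' => b (p.1, y')) y (EuclideanSpace.single i 1))
    p.2 (EuclideanSpace.single i 1)

/-- Convective term `(b · ∇_x) b` at `p = (t,x)`: the spatial derivative of `b`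
in the direction `b p`; its `i`-th component is `Σ_j b_j ∂_{x_j} b_i`. -/
noncomputable def convv {n : ℕ} (b : ℝ × EuclideanSpace ℝ (Fin n) → EuclideanSpace ℝ (Fin n))
    (p : ℝ × EuclideanSpace ℝ (Fin n)) : EuclideanSpace ℝ (Fin n) :=
  fderiv ℝ (fun y => b (p.1, y)) p.2 (b p)

open Filter Topology

section Directional

variable {E F : Type*} [NormedAddCommGroup E] [NormedSpace ℝ E]
  [NormedAddCommGroup F] [NormedSpace ℝ F]

/-- Derivative of `f` in the constant direction `v`, as a function of the base point. -/
noncomputable def dd (v : E) (f : E → F) (p : E) : F := fderiv ℝ f p v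

lemma diffAt_of_contDiffOn {D : Set E} (hD : IsOpen D) {f : E → F} {k : WithTop ℕ∞} (hk : 1 ≤ k)
    (hf : ContDiffOn ℝ k f D) {p : E} (hp : p ∈ D) : DifferentiableAt ℝ f p :=
  (hf.contDiffAt (hD.mem_nhds hp)).differentiableAt (by rintro rfl; simp at hk)

lemma dd_contDiffOn {D : Set E} (hD : IsOpen D) {f : E → F} {k m : WithTop ℕ∞}
    (hf : ContDiffOn ℝ k f D) (hk : m + 1 ≤ k) (v : E) : ContDiffOn ℝ m (dd v f) D :=
  (hf.fderiv_of_isOpen hD hk).clm_apply contDiffOn_const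

lemma dd_congr {D : Set E} (hD : IsOpen D) {f g : E → F} (h : ∀ p ∈ D, f p = g p) (v : E)
    {p : E} (hp : p ∈ D) : dd v f p = dd v g p := by
  have : f =ᶠ[𝓝 p] g := by
    filter_upwards [hD.mem_nhds hp] with q hq using h q hq
  simp only [dd, this.fderiv_eq]

/-- Symmetry of second derivatives. -/
lemma dd_comm {D : Set E} (hD : IsOpen D) {f : E → F} (hf : ContDiffOn ℝ 2 f D) (v w : E)
    {p : E} (hp : p ∈ D) : dd v (dd w f) p = dd w (dd v f) p := by
  have hd : DifferentiableAt ℝ (fderiv ℝ f) p :=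
    diffAt_of_contDiffOn hD le_rfl (hf.fderiv_of_isOpen hD (m := 1) (by norm_num)) hp
  have key : ∀ v w : E, dd v (dd w f) p = fderiv ℝ (fderiv ℝ f) p v w := by
    intro v w
    change fderiv ℝ (fun q => fderiv ℝ f q w) p v = _
    rw [fderiv_clm_apply hd (differentiableAt_const w)]
    simp
  rw [key, key]
  exact (hf.contDiffAt (hD.mem_nhds hp)).isSymmSndFDerivAt (by simp) v w

end Directional

section Slices

variable {n : ℕ} {F : Type*} [NormedAddCommGroup F] [NormedSpace ℝ F]

/-- The `j`-th spatial unit vector in `ℝ × ℝⁿ`. -/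
noncomputable def ee (j : Fin n) : ℝ × EuclideanSpace ℝ (Fin n) :=
  (0, EuclideanSpace.single j 1)

lemma deriv_slice {f : ℝ × EuclideanSpace ℝ (Fin n) → F} {p : ℝ × EuclideanSpace ℝ (Fin n)}
    (hf : DifferentiableAt ℝ f p) : deriv (fun s => f (s, p.2)) p.1 = dd (1, 0) f p := by
  have h : HasDerivAt (fun s : ℝ => (s, p.2)) ((1 : ℝ), (0 : EuclideanSpace ℝ (Fin n))) p.1 :=
    (hasDerivAt_id p.1).prodMk (hasDerivAt_const p.1 p.2)
  exact (HasFDerivAt.comp_hasDerivAt p.1 (f := fun s : ℝ => (s, p.2)) (l := f)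
    hf.hasFDerivAt h).deriv

lemma fderiv_slice {f : ℝ × EuclideanSpace ℝ (Fin n) → F} {p : ℝ × EuclideanSpace ℝ (Fin n)}
    (hf : DifferentiableAt ℝ f p) (v : EuclideanSpace ℝ (Fin n)) :
    fderiv ℝ (fun y => f (p.1, y)) p.2 v = dd (0, v) f p := by
  have h : HasFDerivAt (fun y : EuclideanSpace ℝ (Fin n) => (p.1, y))
      ((0 : EuclideanSpace ℝ (Fin n) →L[ℝ] ℝ).prod (.id ℝ _)) p.2 :=
    (hasFDerivAt_const p.1 p.2).prodMk (hasFDerivAt_id p.2)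
  have := (HasFDerivAt.comp p.2 (f := fun y : EuclideanSpace ℝ (Fin n) => (p.1, y)) (g := f)
    hf.hasFDerivAt h).fderiv
  change fderiv ℝ (f ∘ fun y => (p.1, y)) p.2 v = _
  rw [this]
  simp [dd]

lemma lap_slice {D : Set (ℝ × EuclideanSpace ℝ (Fin n))} (hD : IsOpen D)
    {f : ℝ × EuclideanSpace ℝ (Fin n) → F} (hf : ContDiffOn ℝ 2 f D)
    {p : ℝ × EuclideanSpace ℝ (Fin n)} (hp : p ∈ D) :
    ∑ i, fderiv ℝ (fun y => fderiv ℝ (fun y' => f (p.1, y')) y (EuclideanSpace.single i 1))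
      p.2 (EuclideanSpace.single i 1) = ∑ i, dd (ee i) (dd (ee i) f) p := by
  refine Finset.sum_congr rfl fun i _ => ?_
  have hev : (fun y => fderiv ℝ (fun y' => f (p.1, y')) y (EuclideanSpace.single i 1))
      =ᶠ[𝓝 p.2] fun y => dd (ee i) f (p.1, y) := by
    have hc : ContinuousAt (fun y : EuclideanSpace ℝ (Fin n) => (p.1, y)) p.2 := by fun_prop
    filter_upwards [hc (hD.mem_nhds hp)] with y hy
    exact fderiv_slice (p := (p.1, y)) (diffAt_of_contDiffOn hD (by norm_num) hf hy) _
  rw [hev.fderiv_eq]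
  exact fderiv_slice (diffAt_of_contDiffOn hD le_rfl
    (dd_contDiffOn hD hf (by norm_num) (ee i)) hp) _

lemma gradient_apply_eq (f : EuclideanSpace ℝ (Fin n) → ℝ) (x : EuclideanSpace ℝ (Fin n))
    (i : Fin n) : gradient f x i = fderiv ℝ f x (EuclideanSpace.single i 1) := by
  have h := InnerProductSpace.toDual_symm_apply (𝕜 := ℝ)
    (x := EuclideanSpace.single i (1 : ℝ)) (y := fderiv ℝ f x)
  rw [← h, EuclideanSpace.inner_single_right]
  simp [gradient]

lemma dd_apply {f : ℝ × EuclideanSpace ℝ (Fin n) → EuclideanSpace ℝ (Fin n)}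
    {p : ℝ × EuclideanSpace ℝ (Fin n)} (hf : DifferentiableAt ℝ f p)
    (v : ℝ × EuclideanSpace ℝ (Fin n)) (i : Fin n) :
    dd v f p i = dd v (fun q => f q i) p := by
  have := ((EuclideanSpace.proj i : EuclideanSpace ℝ (Fin n) →L[ℝ] ℝ).hasFDerivAt.comp p
    hf.hasFDerivAt).fderiv
  change _ = fderiv ℝ (⇑(EuclideanSpace.proj i : EuclideanSpace ℝ (Fin n) →L[ℝ] ℝ) ∘ f) p v
  rw [this]
  rfl

lemma dd_spatial (f : ℝ × EuclideanSpace ℝ (Fin n) → ℝ) (p : ℝ × EuclideanSpace ℝ (Fin n))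
    (v : EuclideanSpace ℝ (Fin n)) : dd (0, v) f p = ∑ j, v j * dd (ee j) f p := by
  have hv : ((0 : ℝ), v) = ∑ j, v j • ee j := by
    refine Prod.ext ?_ ?_
    · simp [ee, Prod.fst_sum]
    · ext i
      simp [ee, Prod.snd_sum, Pi.single_apply]
  simp only [dd]
  rw [hv, map_sum]
  simp

/-- The Hamilton–Jacobi–Bellman equation for `S = log η`, from `∂ₜη = η ∂ₜS` and
`∂ⱼ∂ⱼη = η ((∂ⱼS)² + ∂ⱼ∂ⱼS)`. -/
lemma log_heat {hbar : ℝ} {V : EuclideanSpace ℝ (Fin n) → ℝ}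
    {D : Set (ℝ × EuclideanSpace ℝ (Fin n))} (hD : IsOpen D)
    {η S : ℝ × EuclideanSpace ℝ (Fin n) → ℝ} (hη : ContDiffOn ℝ 3 η D) (hS : ContDiffOn ℝ 3 S D)
    (hηpos : ∀ p ∈ D, 0 < η p) (hSη : ∀ p ∈ D, η p = Real.exp (S p))
    (hheat : ∀ p ∈ D, -(hbar * pT η p) = -(hbar ^ 2 / 2) * lapX η p + V p.2 * η p) :
    ∀ p ∈ D, -hbar * dd (1, 0) S p =
      -(hbar ^ 2 / 2) * ∑ j, (dd (ee j) (dd (ee j) S) p + dd (ee j) S p ^ 2) + V p.2 := by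
  have h1 : ∀ v, ∀ p ∈ D, dd v η p = η p * dd v S p := by
    intro v p hp
    rw [dd_congr hD hSη v hp, hSη p hp]
    have := (diffAt_of_contDiffOn hD (by norm_num) hS hp).hasFDerivAt.exp.fderiv
    simp [dd, this]
  have h2 : ∀ v, ∀ p ∈ D, dd v (dd v η) p = η p * (dd v (dd v S) p + dd v S p ^ 2) := by
    intro v p hp
    rw [dd_congr hD (h1 v) v hp]
    have hm := ((diffAt_of_contDiffOn hD (by norm_num) hη hp).hasFDerivAt.mul
      (diffAt_of_contDiffOn hD (k := 2) (by norm_num)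
        (dd_contDiffOn hD hS (by norm_num) v) hp).hasFDerivAt).fderiv
    have h3 : dd v (fun q => η q * dd v S q) p = η p * dd v (dd v S) p + dd v S p * dd v η p := by
      change fderiv ℝ (η * dd v S) p v = _
      rw [hm]
      simp [dd]
    rw [h3, h1 v p hp]
    ring
  intro p hp
  have h := hheat p hp
  have hT : pT η p = η p * dd (1, 0) S p := by
    rw [pT, deriv_slice (diffAt_of_contDiffOn hD (by norm_num) hη hp), h1 _ p hp]
  have hL : lapX η p = η p * ∑ j, (dd (ee j) (dd (ee j) S) p + dd (ee j) S p ^ 2) := by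
    rw [lapX, lap_slice hD (hη.of_le (by norm_num)) hp, Finset.mul_sum]
    exact Finset.sum_congr rfl fun j _ => h2 _ p hp
  rw [hT, hL] at h
  apply mul_left_cancel₀ (hηpos p hp).ne'
  linear_combination h

end Slices

/-- if `η* > 0` is a `C³` solution of `−ℏ∂_tη* = −(ℏ²/2)Δ_xη* + Vη*` on the open
set `D`, then the backward drift `b* = −ℏ∇_x log η*` satisfies the vector equation
`∂_t b* + (b*·∇_x)b* − (ℏ/2)Δ_x b* − ∇V = 0` on `D`. -/
theorem backward_drift_equation {n : ℕ} (hn : 1 ≤ n) (hbar : ℝ) (hhbar : 0 < hbar)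
    (V : EuclideanSpace ℝ (Fin n) → ℝ) (hV : ContDiff ℝ 1 V)
    (D : Set (ℝ × EuclideanSpace ℝ (Fin n))) (hD : IsOpen D)
    (η : ℝ × EuclideanSpace ℝ (Fin n) → ℝ) (hηsmooth : ContDiffOn ℝ 3 η D)
    (hηpos : ∀ p ∈ D, 0 < η p)
    (hheat : ∀ p ∈ D, -(hbar * pT η p) = -(hbar ^ 2 / 2) * lapX η p + V p.2 * η p)
    (b : ℝ × EuclideanSpace ℝ (Fin n) → EuclideanSpace ℝ (Fin n))
    (hb : ∀ p, b p = -(hbar • gX (fun q => Real.log (η q)) p)) :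
    ∀ p ∈ D,
      pTv b p + convv b p - (hbar / 2) • lapXv b p - gradient V p.2 = 0 := by
  intro p hp
  obtain ⟨S, hSdef⟩ : ∃ S : ℝ × EuclideanSpace ℝ (Fin n) → ℝ, S = fun q => Real.log (η q) :=
    ⟨_, rfl⟩
  have hS : ContDiffOn ℝ 3 S D := by
    rw [hSdef]
    exact hηsmooth.log fun q hq => (hηpos q hq).ne'
  have hSη : ∀ q ∈ D, η q = Real.exp (S q) := fun q hq => by
    rw [hSdef]
    exact (Real.exp_log (hηpos q hq)).symm
  have hdS : ∀ v, ContDiffOn ℝ 2 (dd v S) D := fun v => dd_contDiffOn hD hS (by norm_num) v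
  have hddS : ∀ v w, ContDiffOn ℝ 1 (dd v (dd w S)) D :=
    fun v w => dd_contDiffOn hD (hdS w) (by norm_num) v
  have hbi : ∀ i, ∀ q ∈ D, b q i = -hbar * dd (ee i) S q := by
    intro i q hq
    rw [hb q, ← hSdef]
    simp only [PiLp.neg_apply, PiLp.smul_apply, smul_eq_mul, gX, gradient_apply_eq]
    rw [fderiv_slice (diffAt_of_contDiffOn hD (by norm_num) hS hq), ee]
    ring
  have hbsm : ContDiffOn ℝ 2 b D := by
    rw [contDiffOn_euclidean]
    exact fun i => (contDiffOn_const.mul (hdS (ee i))).congr (hbi i)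
  have hbd : ∀ q ∈ D, DifferentiableAt ℝ b q :=
    fun q hq => diffAt_of_contDiffOn hD (by norm_num) hbsm hq
  have ddmul : ∀ v w q, q ∈ D → ∀ g : ℝ × EuclideanSpace ℝ (Fin n) → ℝ,
      ContDiffOn ℝ 1 g D → dd v (fun q => w * g q) q = w * dd v g q := by
    intro v w q hq g hg
    have := ((diffAt_of_contDiffOn hD le_rfl hg hq).hasFDerivAt.const_mul w).fderiv
    simp [dd, this]
  have hb1 : ∀ v i, ∀ q ∈ D, dd v b q i = -hbar * dd v (dd (ee i) S) q := by
    intro v i q hq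
    rw [dd_apply (hbd q hq), dd_congr hD (hbi i) v hq,
      ddmul _ _ q hq _ ((hdS _).of_le (by norm_num))]
  have hb2 : ∀ v i, dd v (dd v b) p i = -hbar * dd v (dd v (dd (ee i) S)) p := by
    intro v i
    rw [dd_apply (diffAt_of_contDiffOn hD le_rfl (dd_contDiffOn hD hbsm (by norm_num) v) hp),
      dd_congr hD (hb1 v i) v hp, ddmul _ _ p hp _ (hddS _ _)]
  have hHJ := log_heat hD hηsmooth hS hηpos hSη hheat
  ext i
  have hVd : HasFDerivAt (fun q : ℝ × EuclideanSpace ℝ (Fin n) => V q.2)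
      ((fderiv ℝ V p.2).comp (ContinuousLinearMap.snd ℝ ℝ (EuclideanSpace ℝ (Fin n)))) p :=
    ((hV.differentiable (by norm_num)) p.2).hasFDerivAt.comp p hasFDerivAt_snd
  -- The `xᵢ`-derivative of the Hamilton–Jacobi–Bellman equation.
  have hdiff : -hbar * dd (ee i) (dd (1, 0) S) p =
      -(hbar ^ 2 / 2) * ∑ j, (dd (ee i) (dd (ee j) (dd (ee j) S)) p
        + 2 * dd (ee j) S p * dd (ee i) (dd (ee j) S) p) + gradient V p.2 i := by
    rw [← ddmul _ _ p hp _ ((hdS _).of_le (by norm_num)), dd_congr hD hHJ (ee i) hp]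
    have hsum := HasFDerivAt.fun_sum (u := Finset.univ) fun j (_ : j ∈ Finset.univ) =>
      (diffAt_of_contDiffOn hD le_rfl (hddS (ee j) (ee j)) hp).hasFDerivAt.add
      ((diffAt_of_contDiffOn hD (by norm_num) (hdS (ee j)) hp).hasFDerivAt.pow 2)
    have := ((hsum.const_mul (-(hbar ^ 2 / 2))).add hVd).fderiv
    change fderiv ℝ _ p (ee i) = _
    refine (congrArg (fun L => L (ee i)) this).trans ?_
    rw [gradient_apply_eq]
    simp [dd, ee]
  have hswap : ∀ j, dd (ee i) (dd (ee j) (dd (ee j) S)) p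
      = dd (ee j) (dd (ee j) (dd (ee i) S)) p := by
    intro j
    rw [dd_comm hD (hdS (ee j)) _ _ hp]
    exact dd_congr hD (fun q hq => dd_comm hD (hS.of_le (by norm_num)) _ _ hq) _ hp
  have hT : pTv b p i = -hbar * dd (ee i) (dd (1, 0) S) p := by
    rw [pTv, deriv_slice (hbd p hp), hb1 _ i p hp, dd_comm hD (hS.of_le (by norm_num)) _ _ hp]
  have hC : convv b p i = ∑ j, hbar ^ 2 * (dd (ee j) S p * dd (ee i) (dd (ee j) S) p) := by
    rw [convv, fderiv_slice (hbd p hp), hb1 _ i p hp, dd_spatial, Finset.mul_sum]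
    refine Finset.sum_congr rfl fun j _ => ?_
    rw [hbi j p hp, dd_comm hD (hS.of_le (by norm_num)) (ee j) (ee i) hp]
    ring
  have hL : lapXv b p i = ∑ j, -hbar * dd (ee j) (dd (ee j) (dd (ee i) S)) p := by
    rw [lapXv, lap_slice hD hbsm hp]
    simp only [WithLp.ofLp_sum, Finset.sum_apply, hb2]
  simp only [PiLp.sub_apply, PiLp.add_apply, PiLp.smul_apply, smul_eq_mul, PiLp.zero_apply]
  rw [hT, hC, hL, hdiff]
  simp only [hswap, Finset.mul_sum, Finset.sum_add_distrib, mul_add]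
  have e1 : ∑ j, hbar / 2 * (-hbar * dd (ee j) (dd (ee j) (dd (ee i) S)) p)
      = ∑ j, -(hbar ^ 2 / 2) * dd (ee j) (dd (ee j) (dd (ee i) S)) p :=
    Finset.sum_congr rfl fun j _ => by ring
  have e2 : ∑ j, -(hbar ^ 2 / 2) * (2 * dd (ee j) S p * dd (ee i) (dd (ee j) S) p)
      = -∑ j, hbar ^ 2 * (dd (ee j) S p * dd (ee i) (dd (ee j) S) p) := by
    rw [← Finset.sum_neg_distrib]
    exact Finset.sum_congr rfl fun j _ => by ring
  rw [e1, e2]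
  ring
end

section
/- Let n ≥ 1, ℏ > 0, let V : ℝⁿ → ℝ, let D ⊆ ℝ × ℝⁿ be open, and let η, η* : D → ℝ be C² with η > 0, satisfying on D the adjoint equations ℏ ∂_t η = −(ℏ²/2) Δ_x η + V(x) η and −ℏ ∂_t η* = −(ℏ²/2) Δ_x η* + V(x) η*. Define ρ := η η* and the drift B := ℏ ∇_x log η (so that B ρ = ℏ η* ∇_x η). Then ρ satisfies the Fokker–Planck (forward Kolmogorov) equation ∂_t ρ + div_x(B ρ) − (ℏ/2) Δ_x ρ = 0 on D. -/
/-- Divergence of a vector field `F : ℝⁿ → ℝⁿ` at `x`: `Σ_i ∂_{x_i} F_i (x)`. -/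
noncomputable def divX {n : ℕ} (F : EuclideanSpace ℝ (Fin n) → EuclideanSpace ℝ (Fin n))
    (x : EuclideanSpace ℝ (Fin n)) : ℝ :=
  ∑ i, fderiv ℝ F x (EuclideanSpace.single i 1) i

section SpatialCalculus

variable {E : Type*} [NormedAddCommGroup E] [NormedSpace ℝ E]

lemma ContDiffAt.eventually_differentiableAt_of_two {f : E → ℝ} {x : E}
    (hf : ContDiffAt ℝ 2 f x) : ∀ᶠ y in nhds x, DifferentiableAt ℝ f y :=
  (hf.eventually (by simp)).mono fun _ hy => hy.differentiableAt (by norm_num)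

lemma ContDiffAt.differentiableAt_fderiv_apply {f : E → ℝ} {x : E}
    (hf : ContDiffAt ℝ 2 f x) (e : E) : DifferentiableAt ℝ (fun y => fderiv ℝ f y e) x :=
  ((hf.fderiv_right (m := 1) (by norm_num)).differentiableAt (by norm_num)).clm_apply
    (differentiableAt_const e)

/-- Second-order Leibniz rule along a direction `e`. -/
lemma fderiv_fderiv_mul {f g : E → ℝ} {x : E} (hf : ContDiffAt ℝ 2 f x)
    (hg : ContDiffAt ℝ 2 g x) (e : E) :
    fderiv ℝ (fun y => fderiv ℝ (fun z => f z * g z) y e) x e =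
      f x * fderiv ℝ (fun y => fderiv ℝ g y e) x e
        + g x * fderiv ℝ (fun y => fderiv ℝ f y e) x e
        + 2 * (fderiv ℝ f x e * fderiv ℝ g x e) := by
  have hev : (fun y => fderiv ℝ (fun z => f z * g z) y e) =ᶠ[nhds x]
      fun y => f y * fderiv ℝ g y e + g y * fderiv ℝ f y e := by
    filter_upwards [hf.eventually_differentiableAt_of_two,
      hg.eventually_differentiableAt_of_two] with y h1 h2
    simp [fderiv_fun_mul h1 h2]
  have hf1 := hf.differentiableAt (by norm_num)
  have hg1 := hg.differentiableAt (by norm_num)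
  have hf2 := hf.differentiableAt_fderiv_apply e
  have hg2 := hg.differentiableAt_fderiv_apply e
  rw [hev.fderiv_eq, fderiv_fun_add (hf1.fun_mul hg2) (hg1.fun_mul hf2), fderiv_fun_mul hf1 hg2,
    fderiv_fun_mul hg1 hf2]
  simp only [add_apply, smul_apply, smul_eq_mul]
  ring

end SpatialCalculus

lemma gradient_apply_eq_fderiv_single {n : ℕ} (f : EuclideanSpace ℝ (Fin n) → ℝ)
    (x : EuclideanSpace ℝ (Fin n)) (i : Fin n) :
    gradient f x i = fderiv ℝ f x (EuclideanSpace.single i 1) := by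
  have h : inner ℝ (gradient f x) (EuclideanSpace.single i (1 : ℝ)) =
      fderiv ℝ f x (EuclideanSpace.single i 1) := by
    simp only [gradient, InnerProductSpace.toDual_symm_apply]
  rw [← h, EuclideanSpace.inner_single_right]
  simp

/-- The divergence of `fg · c∇ log f`, computed through `fg · c∇ log f = cg∇f`, which is valid
near `x` because `f` is nonzero there. -/
lemma divX_smul_gradient_log {n : ℕ} {f g : EuclideanSpace ℝ (Fin n) → ℝ}
    {x : EuclideanSpace ℝ (Fin n)} (c : ℝ) (hf : ContDiffAt ℝ 2 f x)
    (hg : ContDiffAt ℝ 2 g x) (hx : f x ≠ 0) :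
    divX (fun y => (f y * g y) • c • gradient (fun z => Real.log (f z)) y) x =
      ∑ i, c * (fderiv ℝ g x (EuclideanSpace.single i 1) * fderiv ℝ f x (EuclideanSpace.single i 1)
        + g x * fderiv ℝ (fun y => fderiv ℝ f y (EuclideanSpace.single i 1)) x
          (EuclideanSpace.single i 1)) := by
  have hev : (fun y => (f y * g y) • c • gradient (fun z => Real.log (f z)) y) =ᶠ[nhds x]
      fun y => WithLp.toLp 2 fun i => c * (g y * fderiv ℝ f y (EuclideanSpace.single i 1)) := by
    filter_upwards [hf.eventually_differentiableAt_of_two,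
      hf.continuousAt.eventually_ne hx] with y h1 h2
    ext i
    simp only [PiLp.smul_apply, gradient_apply_eq_fderiv_single, fderiv.log h1 h2,
      smul_apply, smul_eq_mul]
    field_simp
  have hg1 := hg.differentiableAt (by norm_num)
  unfold divX
  rw [hev.fderiv_eq]
  refine Finset.sum_congr rfl fun i _ => ?_
  have hcomp (j : Fin n) : DifferentiableAt ℝ
      (fun y => c * (g y * fderiv ℝ f y (EuclideanSpace.single j 1))) x :=
    (hg1.mul (hf.differentiableAt_fderiv_apply _)).const_mul c
  have hF : DifferentiableAt ℝ (fun y => (WithLp.toLp 2 fun i =>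
      c * (g y * fderiv ℝ f y (EuclideanSpace.single i 1)) : EuclideanSpace ℝ (Fin n))) x :=
    (differentiableAt_euclidean).2 hcomp
  -- The `i`-th coordinate of the derivative is the derivative of the `i`-th coordinate.
  have hproj := ((EuclideanSpace.proj i : EuclideanSpace ℝ (Fin n) →L[ℝ] ℝ).hasFDerivAt.comp x
    hF.hasFDerivAt).fderiv
  have hi := congrArg (fun L => L (EuclideanSpace.single i (1 : ℝ))) hproj
  refine Eq.trans hi.symm ?_
  change fderiv ℝ (fun y => c * (g y * fderiv ℝ f y (EuclideanSpace.single i 1))) x _ = _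
  rw [fderiv_const_mul (hg1.fun_mul (hf.differentiableAt_fderiv_apply _)),
    fderiv_fun_mul hg1 (hf.differentiableAt_fderiv_apply _)]
  simp only [add_apply, smul_apply, smul_eq_mul]
  ring

/-- if `η` and `η*` solve the adjoint heat-type equations
`ℏ∂_tη = −(ℏ²/2)Δ_xη + Vη` and `−ℏ∂_tη* = −(ℏ²/2)Δ_xη* + Vη*` on the open set `D`,
with `η > 0`, then `ρ = ηη*` satisfies the Fokker–Planck equation
`∂_tρ + div_x(Bρ) − (ℏ/2)Δ_xρ = 0` on `D`, where `B = ℏ∇_x log η`. -/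
theorem bernstein_density_fokker_planck {n : ℕ} (hn : 1 ≤ n) (hbar : ℝ) (hhbar : 0 < hbar)
    (V : EuclideanSpace ℝ (Fin n) → ℝ)
    (D : Set (ℝ × EuclideanSpace ℝ (Fin n))) (hD : IsOpen D)
    (η ηstar : ℝ × EuclideanSpace ℝ (Fin n) → ℝ)
    (hηsmooth : ContDiffOn ℝ 2 η D) (hηstarsmooth : ContDiffOn ℝ 2 ηstar D)
    (hηpos : ∀ p ∈ D, 0 < η p)
    (hheat : ∀ p ∈ D, hbar * pT η p = -(hbar ^ 2 / 2) * lapX η p + V p.2 * η p)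
    (hheatstar : ∀ p ∈ D, -(hbar * pT ηstar p) = -(hbar ^ 2 / 2) * lapX ηstar p + V p.2 * ηstar p)
    (ρ : ℝ × EuclideanSpace ℝ (Fin n) → ℝ) (hρ : ∀ p, ρ p = η p * ηstar p)
    (B : ℝ × EuclideanSpace ℝ (Fin n) → EuclideanSpace ℝ (Fin n))
    (hB : ∀ p, B p = hbar • gX (fun q => Real.log (η q)) p) :
    ∀ p ∈ D,
      pT ρ p + divX (fun y => ρ (p.1, y) • B (p.1, y)) p.2 - (hbar / 2) * lapX ρ p = 0 := by
  rintro ⟨t, x⟩ hp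
  have hη := hηsmooth.contDiffAt (hD.mem_nhds hp)
  have hηs := hηstarsmooth.contDiffAt (hD.mem_nhds hp)
  have hf : ContDiffAt ℝ 2 (fun y => η (t, y)) x :=
    hη.comp x (contDiffAt_const.prodMk contDiffAt_id)
  have hg : ContDiffAt ℝ 2 (fun y => ηstar (t, y)) x :=
    hηs.comp x (contDiffAt_const.prodMk contDiffAt_id)
  have hft : DifferentiableAt ℝ (fun s => η (s, x)) t :=
    (hη.comp t (contDiffAt_id.prodMk contDiffAt_const)).differentiableAt (by norm_num)
  have hgt : DifferentiableAt ℝ (fun s => ηstar (s, x)) t :=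
    (hηs.comp t (contDiffAt_id.prodMk contDiffAt_const)).differentiableAt (by norm_num)
  have hT : pT ρ (t, x) = pT η (t, x) * ηstar (t, x) + η (t, x) * pT ηstar (t, x) := by
    simp only [pT, hρ]
    exact deriv_fun_mul hft hgt
  have hL : lapX ρ (t, x) = η (t, x) * lapX ηstar (t, x) + ηstar (t, x) * lapX η (t, x)
      + 2 * ∑ i, fderiv ℝ (fun y => η (t, y)) x (EuclideanSpace.single i 1)
        * fderiv ℝ (fun y => ηstar (t, y)) x (EuclideanSpace.single i 1) := by
    simp only [lapX, hρ, Finset.mul_sum, ← Finset.sum_add_distrib]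
    exact Finset.sum_congr rfl fun i _ => fderiv_fderiv_mul hf hg _
  have hDiv : divX (fun y => ρ (t, y) • B (t, y)) x =
      hbar * (∑ i, fderiv ℝ (fun y => η (t, y)) x (EuclideanSpace.single i 1)
        * fderiv ℝ (fun y => ηstar (t, y)) x (EuclideanSpace.single i 1)
        + ηstar (t, x) * lapX η (t, x)) := by
    simp only [hρ, hB, gX]
    rw [divX_smul_gradient_log hbar hf hg (hηpos _ hp).ne']
    simp only [lapX, Finset.mul_sum, ← Finset.sum_add_distrib]
    exact Finset.sum_congr rfl fun i _ => by ring
  have h1 := hheat _ hp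
  have h2 := hheatstar _ hp
  simp only at h1 h2
  rw [hT, hL, hDiv]
  -- The heat equations determine `ℏ ∂_t`, so the claim is checked after multiplying by `ℏ`.
  refine mul_left_cancel₀ hhbar.ne' ?_
  linear_combination ηstar (t, x) * h1 - η (t, x) * h2
end
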